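/- Let α, β ∈ ℝ with |β| ≤ α, and let n = (n1, n2, n3) ∈ ℝ³ with n1² + n2² + n3² = 1. Set c := (Real.sqrt (α+β) + Real.sqrt (α−β))/2, d := (Real.sqrt (α+β) − Real.sqrt (α−β))/2, and S := c • 1 + d • σ_n. Then S is Hermitian, S is positive semidefinite, and S * S = α • 1 + β • σ_n; i.e., S is the positive square root of the POVM element E1 = α • 1 + β • σ_n. -/

import Mathlib

open Matrix ComplexOrder

noncomputable def σx : Matrix (Fin 2) (Fin 2) ℂ := !![0, 1; 1, 0]
noncomputable def σy : Matrix (Fin 2) (Fin 2) ℂ := !![0, -Complex.I; Complex.I, 0]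
noncomputable def σz : Matrix (Fin 2) (Fin 2) ℂ := !![1, 0; 0, -1]

/-- For `v = (v1, v2, v3) ∈ ℝ³`, `σ_v := v1 • σx + v2 • σy + v3 • σz`. -/
noncomputable def pauliVec (v : Fin 3 → ℝ) : Matrix (Fin 2) (Fin 2) ℂ :=
  v 0 • σx + v 1 • σy + v 2 • σz

/-!
A self-adjoint `a` with `a * a = 1` has the spectral projections `p = (1 + a) / 2` and `1 - p`, for
the eigenvalues `1` and `-1`. Hence `α • 1 + β • a = (α + β) • p + (α - β) • (1 - p)`, whose
positive square root is `√(α + β) • p + √(α - β) • (1 - p)`. For a unit vector `n` the matrix `σ_n`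
is such an element, because the Pauli matrices are anticommuting Hermitian involutions.
-/

section PlusProjection

variable {R : Type*} [Ring R] [Algebra ℝ R]

/-- The idempotent `(1 + a) / 2` attached to an involution `a`: its spectral projection for the
eigenvalue `1`. The projection for the eigenvalue `-1` is `1 - plusProjection a`. -/
noncomputable def plusProjection (a : R) : R := (1 / 2 : ℝ) • (1 + a)

theorem add_smul_plusProjection_add_sub_smul (a : R) (x y : ℝ) :
    (x + y) • plusProjection a + (x - y) • (1 - plusProjection a) = x • (1 : R) + y • a := by
  unfold plusProjection
  module

theorem isIdempotentElem_plusProjection {a : R} (ha : a * a = 1) :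
    IsIdempotentElem (plusProjection a) := by
  have one_add_mul_self : (1 + a) * (1 + a) = (2 : ℝ) • (1 + a) := by
    rw [add_mul, mul_add, mul_add, ha, one_mul, mul_one, one_mul]
    module
  rw [IsIdempotentElem, plusProjection, smul_mul_smul_comm, one_add_mul_self, smul_smul]
  norm_num

theorem isStarProjection_plusProjection [StarRing R] [StarModule ℝ R] {a : R}
    (ha : IsSelfAdjoint a) (ha_sq : a * a = 1) : IsStarProjection (plusProjection a) where
  isIdempotentElem := isIdempotentElem_plusProjection ha_sq
  isSelfAdjoint := .smul (.all _) (.add (.one R) ha)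

end PlusProjection

theorem smul_add_smul_one_sub_mul_self {k R : Type*} [CommSemiring k] [Ring R] [Algebra k R]
    {p : R} (hp : IsIdempotentElem p) (s t : k) :
    (s • p + t • (1 - p)) * (s • p + t • (1 - p)) = s ^ 2 • p + t ^ 2 • (1 - p) := by
  simp only [add_mul, mul_add, smul_mul_smul_comm, hp.eq, hp.one_sub.eq, hp.mul_one_sub_self,
    hp.one_sub_mul_self, smul_zero, add_zero, zero_add, sq]

theorem smul_add_smul_one_sub_nonneg {k R : Type*} [Semiring k] [PartialOrder k] [Ring R]
    [StarRing R] [PartialOrder R] [StarOrderedRing R] [Module k R] [PosSMulMono k R] {p : R}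
    (hp : IsStarProjection p) {s t : k} (hs : 0 ≤ s) (ht : 0 ≤ t) :
    0 ≤ s • p + t • (1 - p) :=
  add_nonneg (smul_nonneg hs hp.nonneg) (smul_nonneg ht hp.one_sub_nonneg)

theorem stmt_0_general {R : Type*} [Ring R] [StarRing R] [PartialOrder R] [StarOrderedRing R]
    [Algebra ℝ R] [StarModule ℝ R] {a : R} (ha : IsSelfAdjoint a) (ha_sq : a * a = 1)
    {α β : ℝ} (hβ : |β| ≤ α) {c d : ℝ} (hc : c = (√(α + β) + √(α - β)) / 2)
    (hd : d = (√(α + β) - √(α - β)) / 2) {S : R} (hS : S = c • (1 : R) + d • a) :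
    IsSelfAdjoint S ∧ 0 ≤ S ∧ S * S = α • (1 : R) + β • a := by
  have hp := isStarProjection_plusProjection ha ha_sq
  have S_spectral :
      S = √(α + β) • plusProjection a + √(α - β) • (1 - plusProjection a) := by
    rw [hS, ← add_smul_plusProjection_add_sub_smul, hc, hd]
    congr 2 <;> ring
  have S_nonneg : 0 ≤ S :=
    S_spectral ▸ smul_add_smul_one_sub_nonneg hp (Real.sqrt_nonneg _) (Real.sqrt_nonneg _)
  refine ⟨.of_nonneg S_nonneg, S_nonneg, ?_⟩
  obtain ⟨neg_α_le, le_α⟩ := abs_le.mp hβ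
  rw [S_spectral, smul_add_smul_one_sub_mul_self hp.isIdempotentElem,
    Real.sq_sqrt (by linarith), Real.sq_sqrt (by linarith), add_smul_plusProjection_add_sub_smul]

theorem σx_isHermitian : σx.IsHermitian := by
  ext i j; fin_cases i <;> fin_cases j <;> simp [σx]

theorem σy_isHermitian : σy.IsHermitian := by
  ext i j; fin_cases i <;> fin_cases j <;> simp [σy]

theorem σz_isHermitian : σz.IsHermitian := by
  ext i j; fin_cases i <;> fin_cases j <;> simp [σz]

theorem pauliVec_isHermitian (v : Fin 3 → ℝ) : (pauliVec v).IsHermitian :=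
  ((σx_isHermitian.smul (.all _)).add (σy_isHermitian.smul (.all _))).add
    (σz_isHermitian.smul (.all _))

theorem σx_mul_σx : σx * σx = 1 := by simp [σx, one_fin_two]

theorem σy_mul_σy : σy * σy = 1 := by simp [σy, one_fin_two]

theorem σz_mul_σz : σz * σz = 1 := by simp [σz, one_fin_two]

theorem σy_mul_σx : σy * σx = -(σx * σy) := by simp [σx, σy]

theorem σz_mul_σx : σz * σx = -(σx * σz) := by simp [σx, σz]

theorem σz_mul_σy : σz * σy = -(σy * σz) := by simp [σy, σz]

theorem pauliVec_mul_self (v : Fin 3 → ℝ) :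
    pauliVec v * pauliVec v =
      (v 0 ^ 2 + v 1 ^ 2 + v 2 ^ 2) • (1 : Matrix (Fin 2) (Fin 2) ℂ) := by
  simp only [pauliVec, add_mul, mul_add, smul_mul_smul_comm, σx_mul_σx, σy_mul_σy, σz_mul_σz,
    σy_mul_σx, σz_mul_σx, σz_mul_σy]
  module

theorem stmt_0 (α β : ℝ) (hβ : |β| ≤ α) (n : Fin 3 → ℝ)
    (hn : n 0 ^ 2 + n 1 ^ 2 + n 2 ^ 2 = 1)
    (c d : ℝ) (hc : c = (Real.sqrt (α + β) + Real.sqrt (α - β)) / 2)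
    (hd : d = (Real.sqrt (α + β) - Real.sqrt (α - β)) / 2)
    (S : Matrix (Fin 2) (Fin 2) ℂ)
    (hS : S = c • (1 : Matrix (Fin 2) (Fin 2) ℂ) + d • pauliVec n) :
    S.IsHermitian ∧ S.PosSemidef ∧
      S * S = α • (1 : Matrix (Fin 2) (Fin 2) ℂ) + β • pauliVec n := by
  have pauliVec_sq : pauliVec n * pauliVec n = 1 := by rw [pauliVec_mul_self, hn, one_smul]
  open scoped MatrixOrder in
  simpa only [← isHermitian_iff_isSelfAdjoint, nonneg_iff_posSemidef] using
    stmt_0_general (pauliVec_isHermitian n).isSelfAdjoint pauliVec_sq hβ hc hd hS
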